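/- Let d ≥ 3 be an integer. There exists a constant C = C(d) > 0 with the following property: for every V : ℤᵈ → ℂ with ∑_{n ∈ ℤᵈ} |V(n)|^{2/3} < ∞ and Im V(n) ≥ 0 for all n ∈ ℤᵈ, letting H = Δ + V, every eigenvalue λ of H satisfies Im λ ≥ 0, and ∑_{λ ∈ E} Im λ ≤ ∑_{n ∈ ℤᵈ} Im V(n) + C · ‖V‖_{2/3}, where E is the set of eigenvalues of H lying in ℂ∖[−d,d], each counted once. -/

import Mathlib

/-!
The Laplacian `L` is symmetric, so `Im ⟪f, (L + T) f⟫ = ∑ₙ Im V(n) |f(n)|²` for every `f`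
(`im_inner_apply`); for a single eigenvector this shows that `Im λ ≥ 0`.

For finitely many distinct eigenvalues, the eigenvectors are linearly independent, and their span
`W` is invariant under `L + T`. The trace of the restriction to `W` is the sum of the eigenvalues,
and in an orthonormal basis `(bᵢ)` of `W` it is `∑ᵢ ⟪bᵢ, (L + T) bᵢ⟫`
(`sum_eigenvalues_eq_sum_inner`). Taking imaginary parts,
`∑ Im λ = ∑ₙ Im V(n) ∑ᵢ |bᵢ(n)|² ≤ ∑ₙ Im V(n)`, where the inner sum is at most `1` by Bessel's
inequality against the unit vector at `n`. The term
`C ‖V‖_{2/3}` is nonnegative, so `C = 1` works; `ℓ^{2/3}`-summability enters through the inclusion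
`ℓ^{2/3} ⊆ ℓ¹` (`summable_norm_of_rpow`), which makes `∑ₙ Im V(n)` converge.
-/

/-- `L` is the discrete Laplacian on `ℓ²(ℤᵈ)`:
`(Lf)(n) = (1/2)∑_{j=1}^d (f(n+eⱼ) + f(n-eⱼ))`. -/
def IsDiscreteLaplacian (d : ℕ)
    (L : lp (fun _ : Fin d → ℤ => ℂ) 2 →L[ℂ] lp (fun _ : Fin d → ℤ => ℂ) 2) : Prop :=
  ∀ (f : lp (fun _ : Fin d → ℤ => ℂ) 2) (n : Fin d → ℤ),
    L f n = (1 / 2) * ∑ j : Fin d, (f (n + Pi.single j 1) + f (n - Pi.single j 1))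

/-- `T` is the operator of multiplication by `V` on `ℓ²(ℤᵈ)`. -/
def IsMulOp (d : ℕ) (V : (Fin d → ℤ) → ℂ)
    (T : lp (fun _ : Fin d → ℤ => ℂ) 2 →L[ℂ] lp (fun _ : Fin d → ℤ => ℂ) 2) : Prop :=
  ∀ (f : lp (fun _ : Fin d → ℤ => ℂ) 2) (n : Fin d → ℤ), T f n = V n * f n

/-- The set of eigenvalues of `H` lying in `ℂ \ [-d,d]`. -/
def evSet (d : ℕ)
    (H : lp (fun _ : Fin d → ℤ => ℂ) 2 →L[ℂ] lp (fun _ : Fin d → ℤ => ℂ) 2) : Set ℂ :=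
  {l : ℂ | (∃ f : lp (fun _ : Fin d → ℤ => ℂ) 2, f ≠ 0 ∧ H f = l • f) ∧
    ¬ (l.im = 0 ∧ |l.re| ≤ d)}

open scoped InnerProductSpace

/-- Symmetry of the discrete Laplacian: its quadratic form is real. The `j`-th contribution is
`∑ₙ conj f(n) f(n+eⱼ)` plus its shift by `eⱼ`, which is its complex conjugate. -/
lemma im_inner_laplacian {d : ℕ}
    {L : lp (fun _ : Fin d → ℤ => ℂ) 2 →L[ℂ] lp (fun _ : Fin d → ℤ => ℂ) 2}
    (hL : IsDiscreteLaplacian d L) (f : lp (fun _ : Fin d → ℤ => ℂ) 2) :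
    (⟪f, L f⟫_ℂ).im = 0 := by
  have hsq : Summable (fun n => ‖f n‖ ^ 2) := by
    have := (lp.memℓp f).summable (p := 2) (by norm_num)
    simpa using this
  have hsh (m : Fin d → ℤ) : Summable (fun n => ⟪f n, f (n + m)⟫_ℂ) := by
    have h2 : Summable (fun n => ‖f (n + m)‖ ^ 2) :=
      ((Equiv.addRight m).summable_iff (f := fun n => ‖f n‖ ^ 2)).mpr hsq
    refine Summable.of_norm_bounded (hsq.add h2) fun n => ?_
    refine (norm_inner_le_norm _ _).trans ?_
    nlinarith [sq_nonneg (‖f n‖ - ‖f (n + m)‖), sq_nonneg (‖f n‖), sq_nonneg (‖f (n + m)‖)]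
  have hconj (m : Fin d → ℤ) :
      ∑' n, ⟪f n, f (n - m)⟫_ℂ = starRingEnd ℂ (∑' n, ⟪f n, f (n + m)⟫_ℂ) := by
    rw [Complex.conj_tsum, ← (Equiv.addRight m).tsum_eq]
    exact tsum_congr fun n => by simp only [Equiv.coe_addRight, add_sub_cancel_right, inner_conj_symm]
  have hterm (n : Fin d → ℤ) : ⟪f n, L f n⟫_ℂ =
      ∑ j : Fin d, (1 / 2 : ℂ) * (⟪f n, f (n + Pi.single j 1)⟫_ℂ
        + ⟪f n, f (n - Pi.single j 1)⟫_ℂ) := by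
    rw [hL f n]
    simp only [RCLike.inner_apply, Finset.mul_sum, Finset.sum_mul]
    exact Finset.sum_congr rfl fun j _ => by ring
  have hsh' (m : Fin d → ℤ) : Summable (fun n => ⟪f n, f (n - m)⟫_ℂ) := by
    simpa [sub_eq_add_neg] using hsh (-m)
  rw [lp.inner_eq_tsum]
  simp_rw [hterm]
  rw [Summable.tsum_finsetSum fun j _ => ((hsh _).add (hsh' _)).mul_left _, Complex.im_sum]
  refine Finset.sum_eq_zero fun j _ => ?_
  rw [tsum_mul_left, (hsh _).tsum_add (hsh' _), hconj, Complex.add_conj]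
  simp

lemma summable_im_mul_sq {d : ℕ} {V : (Fin d → ℤ) → ℂ} (hV : Summable fun n => (V n).im)
    (hpos : ∀ n, 0 ≤ (V n).im) (f : lp (fun _ : Fin d → ℤ => ℂ) 2) :
    Summable fun n => (V n).im * ‖f n‖ ^ 2 := by
  refine Summable.of_nonneg_of_le (fun n => mul_nonneg (hpos n) (sq_nonneg _)) (fun n => ?_)
    (hV.mul_right (‖f‖ ^ 2))
  have := lp.norm_apply_le_norm (p := 2) (by norm_num) f n
  have := hpos n
  gcongr

lemma im_inner_apply {d : ℕ} {V : (Fin d → ℤ) → ℂ}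
    {L T : lp (fun _ : Fin d → ℤ => ℂ) 2 →L[ℂ] lp (fun _ : Fin d → ℤ => ℂ) 2}
    (hL : IsDiscreteLaplacian d L) (hT : IsMulOp d V T) (f : lp (fun _ : Fin d → ℤ => ℂ) 2) :
    (⟪f, (L + T) f⟫_ℂ).im = ∑' n, (V n).im * ‖f n‖ ^ 2 := by
  rw [add_apply, inner_add_right, Complex.add_im, im_inner_laplacian hL,
    zero_add, lp.inner_eq_tsum, Complex.im_tsum (lp.summable_inner f (T f))]
  refine tsum_congr fun n => ?_
  rw [hT f n, RCLike.inner_apply, mul_assoc, Complex.mul_conj, Complex.im_mul_ofReal,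
    Complex.normSq_eq_norm_sq]

/-- Equality of two computations of the trace on the span of eigenvectors for distinct eigenvalues:
in the basis of eigenvectors, and in an orthonormal basis. -/
lemma sum_eigenvalues_eq_sum_inner {E : Type*} [NormedAddCommGroup E] [InnerProductSpace ℂ E]
    (H : E →ₗ[ℂ] E) (s : Finset ℂ) (hs : ∀ l ∈ s, ∃ f : E, f ≠ 0 ∧ H f = l • f) :
    ∃ (k : ℕ) (b : Fin k → E), Orthonormal ℂ b ∧ ∑ l ∈ s, l = ∑ i, ⟪b i, H (b i)⟫_ℂ := by
  choose! v hv0 hv using hs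
  have hli : LinearIndependent ℂ (fun l : s => v l) :=
    Module.End.eigenvectors_linearIndependent' H (fun l : s => (l : ℂ)) Subtype.val_injective _
      fun l => Module.End.hasEigenvector_iff.mpr
        ⟨Module.End.mem_eigenspace_iff.mpr (hv l l.2), hv0 l l.2⟩
  set W := Submodule.span ℂ (Set.range fun l : s => v l)
  have hW : ∀ x ∈ W, H x ∈ W := by
    intro x hx
    have : W ≤ W.comap H := by
      refine Submodule.span_le.mpr ?_
      rintro _ ⟨l, rfl⟩
      simp only [SetLike.mem_coe, Submodule.mem_comap]
      rw [hv l l.2]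
      exact W.smul_mem _ (Submodule.subset_span ⟨l, rfl⟩)
    exact this hx
  have : FiniteDimensional ℂ W := FiniteDimensional.span_of_finite ℂ (Set.finite_range _)
  let B : Module.Basis s ℂ W := Module.Basis.span hli
  have hB (l : s) : H.restrict hW (B l) = (l : ℂ) • B l := by
    apply Subtype.ext
    have hBl : (B l : E) = v l := congrArg Subtype.val (Module.Basis.span_apply hli l)
    rw [LinearMap.coe_restrict_apply, Submodule.coe_smul, hBl]
    exact hv l l.2
  let b := stdOrthonormalBasis ℂ W
  refine ⟨_, fun i => (b i : E), b.orthonormal.comp_linearIsometry W.subtypeₗᵢ, ?_⟩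
  have h1 := (H.restrict hW).trace_eq_sum_inner b
  rw [LinearMap.trace_eq_matrix_trace ℂ B, Matrix.trace] at h1
  simp only [Matrix.diag_apply, LinearMap.toMatrix_apply, hB, map_smul, Finsupp.smul_apply,
    Module.Basis.repr_self, Finsupp.single_eq_same, smul_eq_mul, mul_one] at h1
  rw [← Finset.sum_coe_sort, h1]
  rfl

/-- Bessel's inequality against the unit vector at `n`. -/
lemma sum_sq_apply_le_one {d k : ℕ} {b : Fin k → lp (fun _ : Fin d → ℤ => ℂ) 2}
    (hb : Orthonormal ℂ b) (n : Fin d → ℤ) : ∑ i, ‖b i n‖ ^ 2 ≤ 1 := by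
  classical
  have := hb.sum_inner_products_le (lp.single 2 n (1 : ℂ)) (s := Finset.univ)
  simpa [lp.inner_single_right, lp.norm_single] using this

lemma sum_im_eigenvalues_le {d : ℕ} {V : (Fin d → ℤ) → ℂ} (hV : Summable fun n => (V n).im)
    (hpos : ∀ n, 0 ≤ (V n).im)
    {L T : lp (fun _ : Fin d → ℤ => ℂ) 2 →L[ℂ] lp (fun _ : Fin d → ℤ => ℂ) 2}
    (hL : IsDiscreteLaplacian d L) (hT : IsMulOp d V T) (s : Finset ℂ)
    (hs : ∀ l ∈ s, ∃ f : lp (fun _ : Fin d → ℤ => ℂ) 2, f ≠ 0 ∧ (L + T) f = l • f) :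
    ∑ l ∈ s, l.im ≤ ∑' n, (V n).im := by
  obtain ⟨k, b, hb, h⟩ := sum_eigenvalues_eq_sum_inner (L + T).toLinearMap s hs
  have hsum := fun i => summable_im_mul_sq hV hpos (b i)
  have hle (n) : ∑ i, (V n).im * ‖b i n‖ ^ 2 ≤ (V n).im := by
    rw [← Finset.mul_sum]
    exact mul_le_of_le_one_right (hpos n) (sum_sq_apply_le_one hb n)
  calc ∑ l ∈ s, l.im = ∑ i, ∑' n, (V n).im * ‖b i n‖ ^ 2 := by
        rw [← Complex.im_sum, h, Complex.im_sum]
        exact Finset.sum_congr rfl fun i _ => im_inner_apply hL hT (b i)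
    _ = ∑' n, ∑ i, (V n).im * ‖b i n‖ ^ 2 := (Summable.tsum_finsetSum fun i _ => hsum i).symm
    _ ≤ ∑' n, (V n).im := (summable_sum fun i _ => hsum i).tsum_le_tsum hle hV

lemma summable_norm_of_rpow {ι : Type*} {V : ι → ℂ}
    (h : Summable fun n => ‖V n‖ ^ ((2:ℝ)/3)) : Summable fun n => ‖V n‖ := by
  refine Summable.of_norm_bounded_eventually h ?_
  filter_upwards [h.tendsto_cofinite_zero.eventually (gt_mem_nhds one_pos)] with n hn
  have h1 : ‖V n‖ ≤ 1 := by
    by_contra! hc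
    exact absurd hn (not_lt.mpr (Real.one_le_rpow hc.le (by norm_num)))
  rw [norm_norm]
  simpa using Real.rpow_le_rpow_of_exponent_ge' (norm_nonneg (V n)) h1 (by norm_num)
    (by norm_num : (2:ℝ)/3 ≤ 1)

/-- For `d ≥ 3` there is `C = C(d) > 0` such that for every
`V ∈ ℓ^{2/3}(ℤᵈ)` with `Im V ≥ 0`, with `H = Δ + V`, every eigenvalue of `H` has
nonnegative imaginary part and `∑_{λ ∈ E} Im λ ≤ ∑ Im V(n) + C‖V‖_{2/3}`, where `E` is
the set of eigenvalues of `H` in `ℂ \ [-d,d]`. -/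
theorem statement15 (d : ℕ) (hd : 3 ≤ d) :
    ∃ C : ℝ, 0 < C ∧
      ∀ (V : (Fin d → ℤ) → ℂ), Summable (fun n => ‖V n‖ ^ ((2:ℝ)/3)) →
        (∀ n, 0 ≤ (V n).im) →
      ∀ (L T : lp (fun _ : Fin d → ℤ => ℂ) 2 →L[ℂ] lp (fun _ : Fin d → ℤ => ℂ) 2),
        IsDiscreteLaplacian d L → IsMulOp d V T →
        (∀ l : ℂ, (∃ f : lp (fun _ : Fin d → ℤ => ℂ) 2, f ≠ 0 ∧ (L + T) f = l • f) →
          0 ≤ l.im) ∧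
        Summable (fun l : evSet d (L + T) => (l : ℂ).im) ∧
        (∑' l : evSet d (L + T), (l : ℂ).im)
          ≤ (∑' n : Fin d → ℤ, (V n).im)
            + C * (∑' n : Fin d → ℤ, ‖V n‖ ^ ((2:ℝ)/3)) ^ ((3:ℝ)/2) := by
  refine ⟨1, one_pos, fun V hV hpos L T hL hT => ?_⟩
  have hV1 : Summable fun n => (V n).im :=
    Summable.of_nonneg_of_le hpos (fun n => (le_abs_self _).trans (Complex.abs_im_le_norm _))
      (summable_norm_of_rpow hV)
  have him : ∀ l : ℂ, (∃ f : lp (fun _ : Fin d → ℤ => ℂ) 2, f ≠ 0 ∧ (L + T) f = l • f) →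
      0 ≤ l.im := by
    rintro l ⟨f, hf, he⟩
    have h := im_inner_apply hL hT f
    have hff : ⟪f, f⟫_ℂ = ((‖f‖ ^ 2 : ℝ) : ℂ) := by
      simp
    rw [he, inner_smul_right, hff] at h
    have h0 : 0 ≤ ∑' n, (V n).im * ‖f n‖ ^ 2 :=
      tsum_nonneg fun n => mul_nonneg (hpos n) (sq_nonneg _)
    rw [← h, Complex.im_mul_ofReal] at h0
    exact nonneg_of_mul_nonneg_left h0 (by positivity)
  have hfin (s : Finset (evSet d (L + T))) : ∑ l ∈ s, (l : ℂ).im ≤ ∑' n, (V n).im := by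
    have := sum_im_eigenvalues_le hV1 hpos hL hT (s.map (Function.Embedding.subtype _)) (by
      intro l hl
      obtain ⟨m, -, rfl⟩ := Finset.mem_map.mp hl
      exact m.2.1)
    simpa using this
  have hsum : Summable (fun l : evSet d (L + T) => (l : ℂ).im) :=
    summable_of_sum_le (fun l => him l l.2.1) hfin
  have hnonneg : 0 ≤ 1 * (∑' n : Fin d → ℤ, ‖V n‖ ^ ((2:ℝ)/3)) ^ ((3:ℝ)/2) := by positivity
  exact ⟨him, hsum, (hsum.tsum_le_of_sum_le hfin).trans (le_add_of_nonneg_right hnonneg)⟩
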